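/- arXiv:1510.00950 — 6 statements merged into one kernel-verified Lean document; each statement's English description precedes it below -/
import Mathlib

section
/- Let {y_r : r = 0, 1, 2, …} be a set of real numbers such that there is δ > 0 with |y_r − y_{r'}| ≥ δ for all r ≠ r'. If P ≥ 2 and y ≥ x are real numbers, then ∑_{y_r ∈ [x,y]} min(P, ‖y_r‖^{−1}) ≤ 2(y − x + 1)(2P + δ^{−1} log(eP/2)). -/
/-- The distance from a real number to the nearest integer. -/
noncomputable def distNearestInt (x : ℝ) : ℝ := |x - round x|

/-!
On each interval `[k/2, (k+1)/2)` the map `z ↦ ‖z‖` is an isometry into `[0, 1/2]`, so it carries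
the `y_r` lying there to a `δ`-separated family. For `f` antitone and nonnegative on `[0, 1/2]`, the
smallest member of such a family contributes at most `f 0`, and every other member `t` satisfies
`δ f(t) ≤ ∫_{t-δ}^t f` with disjoint intervals of integration, so the family contributes at most
`f 0 + δ⁻¹ ∫_0^{1/2} f`. At most `2 (X - x + 1)` half-unit intervals meet `[x, X]`, and for
`f t = min(P, t⁻¹)` the bound on each of them is `P + δ⁻¹ log(eP/2)`.
-/

open Set MeasureTheory

section SeparatedSums

variable {ι : Type*} {S : Finset ι} {t : ι → ℝ} {f : ℝ → ℝ} {a b δ : ℝ}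

lemma pairwiseDisjoint_Ioc_sub_of_separated {s : Set ι}
    (hsep : s.Pairwise fun i j => δ ≤ |t i - t j|) :
    s.PairwiseDisjoint fun i => Ioc (t i - δ) (t i) := by
  intro i hi j hj hij
  refine Set.disjoint_left.mpr fun u ⟨hiu, hui⟩ ⟨hju, huj⟩ => ?_
  exact (hsep hi hj hij).not_gt (abs_lt.mpr ⟨by linarith, by linarith⟩)

lemma mul_le_setIntegral_Ioc_sub_of_antitoneOn (hδ : 0 ≤ δ)
    (hf : AntitoneOn f (Icc (a - δ) a)) : δ * f a ≤ ∫ u in Ioc (a - δ) a, f u := by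
  have hle : a - δ ≤ a := sub_le_self a hδ
  calc δ * f a = ∫ _ in (a - δ)..a, f a := by simp
    _ ≤ ∫ u in (a - δ)..a, f u :=
        intervalIntegral.integral_mono_on hle intervalIntegrable_const
          (AntitoneOn.intervalIntegrable (by rwa [uIcc_of_le hle]))
          fun u hu => hf hu (right_mem_Icc.mpr hle) hu.2
    _ = ∫ u in Ioc (a - δ) a, f u := intervalIntegral.integral_of_le hle

lemma mul_sum_le_integral_of_antitoneOn_of_separated (hδ : 0 ≤ δ) (hab : a ≤ b)
    (hf : AntitoneOn f (Icc a b)) (hfb : 0 ≤ f b) (ht : ∀ i ∈ S, t i ∈ Icc (a + δ) b)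
    (hsep : (S : Set ι).Pairwise fun i j => δ ≤ |t i - t j|) :
    δ * ∑ i ∈ S, f (t i) ≤ ∫ u in a..b, f u := by
  have hIcc : ∀ i ∈ S, Icc (t i - δ) (t i) ⊆ Icc a b := fun i hi =>
    Icc_subset_Icc (le_sub_right_of_add_le (ht i hi).1) (ht i hi).2
  have hIoc : ⋃ i ∈ S, Ioc (t i - δ) (t i) ⊆ Ioc a b := iUnion₂_subset fun i hi =>
    Ioc_subset_Ioc (le_sub_right_of_add_le (ht i hi).1) (ht i hi).2
  have hint : IntegrableOn f (Icc a b) := hf.integrableOn_isCompact isCompact_Icc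
  have hnonneg : ∀ u ∈ Ioc a b, 0 ≤ f u := fun u hu =>
    hfb.trans (hf (Ioc_subset_Icc_self hu) (right_mem_Icc.mpr hab) hu.2)
  calc δ * ∑ i ∈ S, f (t i) = ∑ i ∈ S, δ * f (t i) := Finset.mul_sum _ _ _
    _ ≤ ∑ i ∈ S, ∫ u in Ioc (t i - δ) (t i), f u := Finset.sum_le_sum fun i hi =>
        mul_le_setIntegral_Ioc_sub_of_antitoneOn hδ (hf.mono (hIcc i hi))
    _ = ∫ u in ⋃ i ∈ S, Ioc (t i - δ) (t i), f u :=
        (integral_biUnion_finset S (fun _ _ => measurableSet_Ioc)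
          (pairwiseDisjoint_Ioc_sub_of_separated hsep) fun i hi =>
            hint.mono_set (Ioc_subset_Icc_self.trans (hIcc i hi))).symm
    _ ≤ ∫ u in Ioc a b, f u :=
        setIntegral_mono_set (hint.mono_set Ioc_subset_Icc_self)
          (ae_restrict_of_forall_mem measurableSet_Ioc hnonneg) hIoc.eventuallyLE
    _ = ∫ u in a..b, f u := (intervalIntegral.integral_of_le hab).symm

lemma sum_le_add_inv_mul_integral_of_antitoneOn_of_separated (hδ : 0 < δ) (hab : a ≤ b)
    (hf : AntitoneOn f (Icc a b)) (hfb : 0 ≤ f b) (ht : ∀ i ∈ S, t i ∈ Icc a b)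
    (hsep : (S : Set ι).Pairwise fun i j => δ ≤ |t i - t j|) :
    ∑ i ∈ S, f (t i) ≤ f a + δ⁻¹ * ∫ u in a..b, f u := by
  classical
  have ha : a ∈ Icc a b := left_mem_Icc.mpr hab
  have hfa : 0 ≤ f a := hfb.trans (hf ha (right_mem_Icc.mpr hab) hab)
  rcases S.eq_empty_or_nonempty with rfl | hS
  · have hint : 0 ≤ ∫ u in a..b, f u := intervalIntegral.integral_nonneg hab fun u hu =>
      hfb.trans (hf hu (right_mem_Icc.mpr hab) hu.2)
    rw [Finset.sum_empty]
    positivity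
  obtain ⟨m, hm, hmin⟩ := S.exists_min_image t hS
  have hrest : ∀ i ∈ S.erase m, t i ∈ Icc (a + δ) b := by
    intro i hi
    obtain ⟨him, hi⟩ := Finset.mem_erase.mp hi
    have hgap : δ ≤ t i - t m := by
      simpa only [abs_of_nonneg (sub_nonneg.mpr (hmin i hi))] using hsep hi hm him
    exact ⟨by linarith [(ht m hm).1], (ht i hi).2⟩
  rw [← Finset.add_sum_erase S _ hm]
  refine add_le_add (hf ha (ht m hm) (ht m hm).1) ((le_inv_mul_iff₀ hδ).mpr ?_)
  exact mul_sum_le_integral_of_antitoneOn_of_separated hδ.le hab hf hfb hrest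
    (hsep.mono (Finset.coe_subset.mpr (S.erase_subset m)))

end SeparatedSums

section DistNearestInt

lemma distNearestInt_nonneg (z : ℝ) : 0 ≤ distNearestInt z := abs_nonneg _

lemma distNearestInt_mem_Icc (z : ℝ) : distNearestInt z ∈ Icc (0 : ℝ) (1 / 2) :=
  ⟨distNearestInt_nonneg z, abs_sub_round z⟩

lemma distNearestInt_of_floor_two_mul_eq_two_mul {z : ℝ} {n : ℤ} (h : ⌊2 * z⌋ = 2 * n) :
    distNearestInt z = z - n := by
  obtain ⟨hle, hlt⟩ := Int.floor_eq_iff.mp h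
  push_cast at hle hlt
  have hround : round z = n := by
    rw [round_eq, Int.floor_eq_iff]
    constructor <;> linarith
  rw [distNearestInt, hround, abs_of_nonneg (by linarith)]

lemma distNearestInt_of_floor_two_mul_eq_two_mul_add_one {z : ℝ} {n : ℤ}
    (h : ⌊2 * z⌋ = 2 * n + 1) : distNearestInt z = n + 1 - z := by
  obtain ⟨hle, hlt⟩ := Int.floor_eq_iff.mp h
  push_cast at hle hlt
  have hround : round z = n + 1 := by
    rw [round_eq, Int.floor_eq_iff]
    push_cast
    constructor <;> linarith
  rw [distNearestInt, hround, abs_of_nonpos (by push_cast; linarith)]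
  push_cast
  ring

lemma abs_distNearestInt_sub_distNearestInt {z w : ℝ} (h : ⌊2 * z⌋ = ⌊2 * w⌋) :
    |distNearestInt z - distNearestInt w| = |z - w| := by
  obtain ⟨n, hn | hn⟩ := Int.even_or_odd' ⌊2 * w⌋
  · rw [distNearestInt_of_floor_two_mul_eq_two_mul (h.trans hn),
      distNearestInt_of_floor_two_mul_eq_two_mul hn, sub_sub_sub_cancel_right]
  · rw [distNearestInt_of_floor_two_mul_eq_two_mul_add_one (h.trans hn),
      distNearestInt_of_floor_two_mul_eq_two_mul_add_one hn, sub_sub_sub_cancel_left, abs_sub_comm]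

variable {ι : Type*} {S : Finset ι} {y : ι → ℝ} {f : ℝ → ℝ} {δ x X : ℝ}

lemma sum_comp_distNearestInt_le_of_floor_two_mul_eq (hδ : 0 < δ)
    (hf : AntitoneOn f (Icc 0 (1 / 2))) (hf_half : 0 ≤ f (1 / 2)) {k : ℤ}
    (hS : ∀ i ∈ S, ⌊2 * y i⌋ = k) (hsep : (S : Set ι).Pairwise fun i j => δ ≤ |y i - y j|) :
    ∑ i ∈ S, f (distNearestInt (y i)) ≤ f 0 + δ⁻¹ * ∫ u in (0 : ℝ)..(1 / 2), f u := by
  refine sum_le_add_inv_mul_integral_of_antitoneOn_of_separated hδ (by norm_num) hf hf_half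
    (fun i _ => distNearestInt_mem_Icc (y i)) fun i hi j hj hij => ?_
  simpa only [abs_distNearestInt_sub_distNearestInt ((hS i hi).trans (hS j hj).symm)]
    using hsep hi hj hij

lemma card_Icc_floor_two_mul_le (hxX : x ≤ X) :
    ((Finset.Icc ⌊2 * x⌋ ⌊2 * X⌋).card : ℝ) ≤ 2 * (X - x + 1) := by
  have hfloor : ⌊2 * x⌋ ≤ ⌊2 * X⌋ := Int.floor_le_floor (by linarith)
  have hcard : ((Finset.Icc ⌊2 * x⌋ ⌊2 * X⌋).card : ℝ) = ⌊2 * X⌋ + 1 - ⌊2 * x⌋ := by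
    exact_mod_cast Int.card_Icc_of_le _ _ (by lia)
  linarith [Int.floor_le (2 * X), Int.lt_floor_add_one (2 * x)]

lemma sum_comp_distNearestInt_le (hδ : 0 < δ) (hf : AntitoneOn f (Icc 0 (1 / 2)))
    (hf_half : 0 ≤ f (1 / 2)) (hxX : x ≤ X) (hS : ∀ i ∈ S, y i ∈ Icc x X)
    (hsep : (S : Set ι).Pairwise fun i j => δ ≤ |y i - y j|) :
    ∑ i ∈ S, f (distNearestInt (y i)) ≤
      2 * (X - x + 1) * (f 0 + δ⁻¹ * ∫ u in (0 : ℝ)..(1 / 2), f u) := by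
  classical
  have hfloor : ∀ i ∈ S, ⌊2 * y i⌋ ∈ Finset.Icc ⌊2 * x⌋ ⌊2 * X⌋ := fun i hi =>
    Finset.mem_Icc.mpr ⟨Int.floor_le_floor (by linarith [(hS i hi).1]),
      Int.floor_le_floor (by linarith [(hS i hi).2])⟩
  have hbound : 0 ≤ f 0 + δ⁻¹ * ∫ u in (0 : ℝ)..(1 / 2), f u := by
    simpa using sum_comp_distNearestInt_le_of_floor_two_mul_eq (S := (∅ : Finset ι)) (y := y)
      (k := 0) hδ hf hf_half (by simp) (by simp)
  calc ∑ i ∈ S, f (distNearestInt (y i))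
      = ∑ k ∈ Finset.Icc ⌊2 * x⌋ ⌊2 * X⌋, ∑ i ∈ S with ⌊2 * y i⌋ = k, f (distNearestInt (y i)) :=
        (Finset.sum_fiberwise_of_maps_to hfloor _).symm
    _ ≤ (Finset.Icc ⌊2 * x⌋ ⌊2 * X⌋).card •
          (f 0 + δ⁻¹ * ∫ u in (0 : ℝ)..(1 / 2), f u) :=
        Finset.sum_le_card_nsmul _ _ _ fun k _ =>
          sum_comp_distNearestInt_le_of_floor_two_mul_eq hδ hf hf_half
            (fun i hi => (Finset.mem_filter.mp hi).2)
            (hsep.mono (Finset.coe_subset.mpr (S.filter_subset _)))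
    _ ≤ 2 * (X - x + 1) * (f 0 + δ⁻¹ * ∫ u in (0 : ℝ)..(1 / 2), f u) := by
        rw [nsmul_eq_mul]
        exact mul_le_mul_of_nonneg_right (card_Icc_floor_two_mul_le hxX) hbound

end DistNearestInt

section TruncatedInverse

variable {P ε b t : ℝ}

lemma ite_min_inv_eq_inv_max (hP : 0 < P) (ht : 0 ≤ t) :
    (if t = 0 then P else min P t⁻¹) = (max P⁻¹ t)⁻¹ := by
  rcases ht.eq_or_lt with rfl | ht
  · rw [if_pos rfl, max_eq_left (inv_pos.mpr hP).le, inv_inv]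
  rw [if_neg ht.ne']
  rcases le_total P⁻¹ t with h | h
  · rw [max_eq_right h, min_eq_right (inv_le_of_inv_le₀ hP h)]
  · rw [max_eq_left h, inv_inv, min_eq_left ((le_inv_comm₀ hP ht).mpr h)]

lemma antitone_inv_max (hε : 0 < ε) : Antitone fun u : ℝ => (max ε u)⁻¹ :=
  fun _ _ h => inv_anti₀ (lt_max_of_lt_left hε) (max_le_max_left ε h)

lemma integral_inv_max (hε : 0 < ε) (hεb : ε ≤ b) :
    ∫ u in (0 : ℝ)..b, (max ε u)⁻¹ = 1 + Real.log (b / ε) := by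
  have hint (c d : ℝ) : IntervalIntegrable (fun u => (max ε u)⁻¹) volume c d :=
    (antitone_inv_max hε).intervalIntegrable
  have hconst : ∫ u in (0 : ℝ)..ε, (max ε u)⁻¹ = 1 := by
    calc ∫ u in (0 : ℝ)..ε, (max ε u)⁻¹ = ∫ _ in (0 : ℝ)..ε, ε⁻¹ :=
          intervalIntegral.integral_congr fun u hu => by
            rw [uIcc_of_le hε.le] at hu
            simp only [max_eq_left hu.2]
      _ = 1 := by simp [hε.ne']
  have hinv : ∫ u in ε..b, (max ε u)⁻¹ = Real.log (b / ε) := by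
    rw [← integral_inv_of_pos hε (hε.trans_le hεb)]
    refine intervalIntegral.integral_congr fun u hu => ?_
    rw [uIcc_of_le hεb] at hu
    simp only [max_eq_right hu.1]
  rw [← intervalIntegral.integral_add_adjacent_intervals (hint 0 ε) (hint ε b), hconst, hinv]

lemma integral_inv_max_inv_half (hP : 2 ≤ P) :
    ∫ u in (0 : ℝ)..(1 / 2), (max P⁻¹ u)⁻¹ = Real.log (Real.exp 1 * P / 2) := by
  have hP₀ : 0 < P := two_pos.trans_le hP
  have hinv : P⁻¹ ≤ 1 / 2 := by rw [one_div]; exact inv_anti₀ two_pos hP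
  rw [integral_inv_max (inv_pos.mpr hP₀) hinv, mul_div_assoc,
    Real.log_mul (Real.exp_pos 1).ne' (by positivity), Real.log_exp, div_inv_eq_mul,
    one_div_mul_eq_div]

end TruncatedInverse

theorem well_spacing_large_P_general {ι : Type*} {y : ι → ℝ} {δ P x X : ℝ} (hδ : 0 < δ)
    (hsep : Pairwise fun i j => δ ≤ |y i - y j|) (hP : 2 ≤ P) (hxX : x ≤ X) :
    ∑' i : {i // y i ∈ Icc x X},
        (if distNearestInt (y i) = 0 then P else min P (distNearestInt (y i))⁻¹) ≤
      2 * (X - x + 1) * (P + δ⁻¹ * Real.log (Real.exp 1 * P / 2)) := by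
  have hP₀ : 0 < P := two_pos.trans_le hP
  have hε : 0 < P⁻¹ := inv_pos.mpr hP₀
  simp only [ite_min_inv_eq_inv_max hP₀ (distNearestInt_nonneg _)]
  refine Real.tsum_le_of_sum_le (fun i => by positivity) fun S => ?_
  have hbound := sum_comp_distNearestInt_le (S := S) (y := fun i => y i) hδ
    ((antitone_inv_max hε).antitoneOn _) (by positivity) hxX (fun i _ => i.2)
    fun i _ j _ hij => hsep (Subtype.coe_injective.ne hij)
  rwa [integral_inv_max_inv_half hP, max_eq_left hε.le, inv_inv] at hbound

/-- Well-spacing lemma, case `P ≥ 2`: if the `y_r` are `δ`-spaced, then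
`∑_{y_r ∈ [x,y]} min(P, ‖y_r‖⁻¹) ≤ 2(y−x+1)(2P + δ⁻¹ log(eP/2))`, with the convention that
the summand equals `P` when `y_r` is an integer (i.e. `‖y_r‖⁻¹ = ∞`). -/
theorem well_spacing_large_P (y : ℕ → ℝ) (δ : ℝ) (hδ : 0 < δ)
    (hsep : ∀ r r' : ℕ, r ≠ r' → δ ≤ |y r - y r'|)
    (P x X : ℝ) (hP : 2 ≤ P) (hxX : x ≤ X) :
    ∑' r : {r : ℕ // y r ∈ Set.Icc x X},
        (if distNearestInt (y r) = 0 then P else min P (distNearestInt (y r))⁻¹) ≤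
      2 * (X - x + 1) * (2 * P + δ⁻¹ * Real.log (Real.exp 1 * P / 2)) := by
  exact (well_spacing_large_P_general hδ hsep hP hxX).trans
    (mul_le_mul_of_nonneg_left (by linarith) (by linarith))
end

section
/- Let {y_r : r = 0, 1, 2, …} be a set of real numbers such that there is δ > 0 with |y_r − y_{r'}| ≥ δ for all r ≠ r'. If 0 < P < 2 and y ≥ x are real numbers, then ∑_{y_r ∈ [x,y]} min(P, ‖y_r‖^{−1}) ≤ 2(y − x + 1)(P + δ^{−1}). -/
/-!
A half-open interval of length `δ` contains at most one `y r`, so at most `(X - x) / δ + 1` of the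
`y r` lie in `[x, X]`. Each of them contributes at most `P`, and `P < 2` absorbs the product of `P`
with `(X - x) / δ` into `2 (X - x) / δ`.
-/

section Separated

variable {ι K : Type*} [Field K] [LinearOrder K] [IsStrictOrderedRing K] [FloorRing K]
  {y : ι → K} {δ : K}

theorem injective_floor_sub_div_of_separated (hδ : 0 < δ)
    (hsep : Pairwise fun r r' ↦ δ ≤ |y r - y r'|) (x : K) :
    Function.Injective fun r ↦ ⌊(y r - x) / δ⌋ := by
  intro r r' hfloor
  by_contra hne
  have hlt : |y r - y r'| / δ < 1 := by
    simpa only [← sub_div, sub_sub_sub_cancel_right, abs_div, abs_of_pos hδ] using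
      Int.abs_sub_lt_one_of_floor_eq_floor hfloor
  exact ((div_lt_one hδ).mp hlt).not_ge (hsep hne)

theorem mapsTo_floor_sub_div (y : ι → K) (hδ : 0 < δ) (x X : K) :
    Set.MapsTo (fun r ↦ ⌊(y r - x) / δ⌋) (y ⁻¹' Set.Icc x X) (Set.Icc 0 ⌊(X - x) / δ⌋) := by
  rintro r ⟨hxr, hrX⟩
  exact ⟨Int.floor_nonneg.mpr (div_nonneg (sub_nonneg.mpr hxr) hδ.le),
    Int.floor_le_floor (by gcongr)⟩

theorem finite_preimage_Icc_of_separated (hδ : 0 < δ)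
    (hsep : Pairwise fun r r' ↦ δ ≤ |y r - y r'|) (x X : K) : (y ⁻¹' Set.Icc x X).Finite :=
  Set.Finite.of_injOn (mapsTo_floor_sub_div y hδ x X)
    (injective_floor_sub_div_of_separated hδ hsep x).injOn (Set.finite_Icc _ _)

theorem ncard_preimage_Icc_le_of_separated (hδ : 0 < δ)
    (hsep : Pairwise fun r r' ↦ δ ≤ |y r - y r'|) {x X : K} (hxX : x ≤ X) :
    ((y ⁻¹' Set.Icc x X).ncard : K) ≤ (X - x) / δ + 1 := by
  have hfloor : 0 ≤ ⌊(X - x) / δ⌋ :=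
    Int.floor_nonneg.mpr (div_nonneg (sub_nonneg.mpr hxX) hδ.le)
  have hcard : ((y ⁻¹' Set.Icc x X).ncard : ℤ) ≤ ⌊(X - x) / δ⌋ + 1 := by
    calc ((y ⁻¹' Set.Icc x X).ncard : ℤ)
        ≤ (Set.Icc 0 ⌊(X - x) / δ⌋).ncard := by
          exact_mod_cast Set.ncard_le_ncard_of_injOn _ (mapsTo_floor_sub_div y hδ x X)
            (injective_floor_sub_div_of_separated hδ hsep x).injOn (Set.finite_Icc _ _)
      _ = ⌊(X - x) / δ⌋ + 1 := by
          rw [← Finset.coe_Icc, Set.ncard_coe_finset, Int.card_Icc_of_le _ _ (by lia), sub_zero]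
  calc ((y ⁻¹' Set.Icc x X).ncard : K)
      ≤ ⌊(X - x) / δ⌋ + 1 := by exact_mod_cast hcard
    _ ≤ (X - x) / δ + 1 := by gcongr; exact Int.floor_le _

end Separated

theorem tsum_subtype_le_ncard_mul {ι : Type*} {s : Set ι} (hs : s.Finite) {f : ι → ℝ} {c : ℝ}
    (hf : ∀ i ∈ s, f i ≤ c) : ∑' i : s, f i ≤ s.ncard * c := by
  have := hs.fintype
  calc ∑' i : s, f i = ∑ i : s, f i := tsum_fintype _
    _ ≤ Fintype.card s • c := Finset.sum_le_card_nsmul _ _ _ fun i _ ↦ hf i i.2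
    _ = s.ncard * c := by rw [nsmul_eq_mul, ← Nat.card_eq_fintype_card, Nat.card_coe_set_eq]

theorem div_add_one_mul_le {K : Type*} [Field K] [LinearOrder K] [IsStrictOrderedRing K]
    {L P δ : K} (hL : 0 ≤ L) (hδ : 0 ≤ δ) (hP0 : 0 ≤ P) (hP : P ≤ 2) :
    (L / δ + 1) * P ≤ 2 * (L + 1) * (P + δ⁻¹) := by
  calc (L / δ + 1) * P = L * δ⁻¹ * P + P := by ring
    _ ≤ L * δ⁻¹ * 2 + P := by gcongr
    _ ≤ L * δ⁻¹ * 2 + P + (2 * L * P + P + 2 * δ⁻¹) := le_add_of_nonneg_right (by positivity)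
    _ = 2 * (L + 1) * (P + δ⁻¹) := by ring

theorem well_spacing_small_P_general {ι : Type*} {y : ι → ℝ} {δ : ℝ} (hδ : 0 < δ)
    (hsep : Pairwise fun r r' ↦ δ ≤ |y r - y r'|) {P x X : ℝ} (hP0 : 0 ≤ P) (hxX : x ≤ X)
    {f : ι → ℝ} (hf : ∀ r, y r ∈ Set.Icc x X → f r ≤ P) :
    ∑' r : {r : ι // y r ∈ Set.Icc x X}, f r ≤ ((X - x) / δ + 1) * P :=
  (tsum_subtype_le_ncard_mul (finite_preimage_Icc_of_separated hδ hsep x X) hf).trans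
    (mul_le_mul_of_nonneg_right (ncard_preimage_Icc_le_of_separated hδ hsep hxX) hP0)

/-- Well-spacing lemma, case `0 < P < 2`: if the `y_r` are `δ`-spaced, then
`∑_{y_r ∈ [x,y]} min(P, ‖y_r‖⁻¹) ≤ 2(y−x+1)(P + δ⁻¹)`, with the convention that
the summand equals `P` when `y_r` is an integer (i.e. `‖y_r‖⁻¹ = ∞`). -/
theorem well_spacing_small_P (y : ℕ → ℝ) (δ : ℝ) (hδ : 0 < δ)
    (hsep : ∀ r r' : ℕ, r ≠ r' → δ ≤ |y r - y r'|)
    (P x X : ℝ) (hP0 : 0 < P) (hP : P < 2) (hxX : x ≤ X) :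
    ∑' r : {r : ℕ // y r ∈ Set.Icc x X},
        (if distNearestInt (y r) = 0 then P else min P (distNearestInt (y r))⁻¹) ≤
      2 * (X - x + 1) * (P + δ⁻¹) := by
  have hterm (r : ℕ) :
      (if distNearestInt (y r) = 0 then P else min P (distNearestInt (y r))⁻¹) ≤ P := by
    split_ifs <;> simp
  exact (well_spacing_small_P_general hδ hsep hP0.le hxX fun r _ ↦ hterm r).trans
    (div_add_one_mul_le (sub_nonneg.mpr hxX) hδ.le hP0.le hP.le)
end

section
/- Let χ be a Dirichlet character modulo q. Then there exists an integer L̃ such that χ(1 + C₁(q)·x) = e^{2πi L̃ x / D₁(q)} for all integers x. Moreover, if χ is primitive, then gcd(L̃, D₁(q)) = 1. -/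
open Complex

/-- `C₁(q) = ∏_{p^a ∥ q} p^⌈a/2⌉` (multiplicative extension of `C₁(p^a) := p^⌈a/2⌉`). -/
def C1 (q : ℕ) : ℕ := q.factorization.prod fun p a => p ^ ((a + 1) / 2)

/-- `D₁(q) = ∏_{p^a ∥ q} p^{a−⌈a/2⌉}` (multiplicative extension of `D₁(p^a) := p^{a−⌈a/2⌉}`). -/
def D1 (q : ℕ) : ℕ := q.factorization.prod fun p a => p ^ (a / 2)

/-!
If `q = c * d` with `d ∣ c`, then `c ^ 2 = 0` in `ZMod q`, so `x ↦ 1 + c * x` turns addition into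
multiplication and `χ (1 + c * x) = ζ ^ x` with `ζ = χ (1 + c)` a `d`-th root of unity. Writing
`ζ = e ^ (2πi L / d)` gives the formula. If `ζ` has order `o`, then `χ` is trivial on the residues
congruent to `1` modulo `c * o`, so it factors through `c * o`; primitivity forces `o = d`.
-/

theorem C1_mul_D1 {q : ℕ} (hq : q ≠ 0) : C1 q * D1 q = q := by
  calc
    C1 q * D1 q = q.factorization.prod fun p a => p ^ ((a + 1) / 2) * p ^ (a / 2) :=
      Finsupp.prod_mul.symm
    _ = q.factorization.prod fun p a => p ^ a :=
      Finsupp.prod_congr fun p _ => by rw [← pow_add]; congr 1; lia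
    _ = q := Nat.prod_factorization_pow_eq_self hq

theorem D1_dvd_C1 (q : ℕ) : D1 q ∣ C1 q := by
  unfold D1 C1
  exact Finset.prod_dvd_prod_of_dvd _ _ fun p _ => pow_dvd_pow p (by lia)

/-- The additive character `x ↦ 1 + c * x` of a commutative ring attached to an element `c` of
square zero, through which a multiplicative character becomes an additive one. -/
def oneAddMulAddChar {R : Type*} [CommRing R] (c : R) (hc : c * c = 0) : AddChar R R where
  toFun x := 1 + c * x
  map_zero_eq_one' := by rw [mul_zero, add_zero]
  map_add_eq_mul' x y := by linear_combination -(x * y) * hc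

theorem map_one_add_mul_intCast {R M : Type*} [CommRing R] [DivisionMonoid M] (χ : R →* M) {c : R}
    (hc : c * c = 0) (n : ℤ) : χ (1 + c * n) = χ (1 + c) ^ n := by
  simpa [oneAddMulAddChar] using
    (χ.compAddChar (oneAddMulAddChar c hc)).map_zsmul_eq_zpow n 1

theorem natCast_mul_self_eq_zero_of_mul_eq {q c d : ℕ} (hcd : c * d = q) (hdc : d ∣ c) :
    (c * c : ZMod q) = 0 := by
  rw [← Nat.cast_mul, ZMod.natCast_eq_zero_iff, ← hcd]
  exact mul_dvd_mul_left c hdc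

theorem exists_eq_one_add_mul_of_unitsMap_eq_one {q m : ℕ} (hm : m ∣ q) {u : (ZMod q)ˣ}
    (hu : ZMod.unitsMap hm u = 1) : ∃ x : ℤ, (u : ZMod q) = 1 + m * x := by
  obtain ⟨n, hn⟩ := ZMod.intCast_surjective (u : ZMod q)
  have hn_mod : ((1 : ℤ) : ZMod m) = n := by
    simpa [ZMod.unitsMap_def, ← hn] using (congrArg Units.val hu).symm
  obtain ⟨x, hx⟩ := (ZMod.intCast_eq_intCast_iff_dvd_sub 1 n m).mp hn_mod
  refine ⟨x, ?_⟩
  rw [← hn]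
  exact_mod_cast congrArg (Int.cast (R := ZMod q)) (eq_add_of_sub_eq' hx)

theorem factorsThrough_of_map_one_add_mul_eq_one {R : Type*} [CommMonoidWithZero R] {q m : ℕ}
    [NeZero q] {χ : DirichletCharacter R q} (hm : m ∣ q)
    (h : ∀ x : ℤ, χ (1 + m * x) = 1) : χ.FactorsThrough m := by
  rw [DirichletCharacter.factorsThrough_iff_ker_unitsMap hm]
  intro u hu
  obtain ⟨x, hx⟩ := exists_eq_one_add_mul_of_unitsMap_eq_one hm hu
  rw [MonoidHom.mem_ker, Units.ext_iff, MulChar.coe_toUnitHom, hx, h, Units.val_one]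

theorem eq_level_of_isPrimitive_of_factorsThrough {R : Type*} [CommMonoidWithZero R] {q m : ℕ}
    [NeZero q] {χ : DirichletCharacter R q} (hχ : χ.IsPrimitive) (hm : χ.FactorsThrough m) :
    m = q :=
  (Nat.le_of_dvd (NeZero.pos q) hm.dvd).antisymm (hχ ▸ Nat.sInf_le hm)

section Factorization

variable {K : Type*} [CommGroupWithZero K] {q c d : ℕ}

theorem map_one_add_natCast_mul_intCast (χ : DirichletCharacter K q) (hcd : c * d = q)
    (hdc : d ∣ c) (x : ℤ) : χ (1 + c * x) = χ (1 + c) ^ x :=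
  map_one_add_mul_intCast (χ : ZMod q →* K) (natCast_mul_self_eq_zero_of_mul_eq hcd hdc) x

theorem map_one_add_natCast_pow_eq_one (χ : DirichletCharacter K q) (hcd : c * d = q)
    (hdc : d ∣ c) : χ (1 + c) ^ d = 1 := by
  have hcd_zero : (c * d : ZMod q) = 0 := by rw [← Nat.cast_mul, hcd, ZMod.natCast_self]
  simpa [hcd_zero] using (map_one_add_natCast_mul_intCast χ hcd hdc d).symm

theorem isPrimitiveRoot_map_one_add_natCast [NeZero q] {χ : DirichletCharacter K q}
    (hχ : χ.IsPrimitive) (hcd : c * d = q) (hdc : d ∣ c) : IsPrimitiveRoot (χ (1 + c)) d := by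
  set o := orderOf (χ (1 + c)) with ho
  have ho_dvd : o ∣ d := orderOf_dvd_of_pow_eq_one (map_one_add_natCast_pow_eq_one χ hcd hdc)
  have htrivial (x : ℤ) : χ (1 + (c * o : ℕ) * x) = 1 := by
    calc
      χ (1 + (c * o : ℕ) * x) = χ (1 + c * (o * x : ℤ)) := by push_cast; rw [mul_assoc]
      _ = (χ (1 + c) ^ o) ^ x := by
        rw [map_one_add_natCast_mul_intCast χ hcd hdc, zpow_mul, zpow_natCast]
      _ = 1 := by rw [ho, pow_orderOf_eq_one, one_zpow]
  have hfactors : χ.FactorsThrough (c * o) :=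
    factorsThrough_of_map_one_add_mul_eq_one (hcd ▸ mul_dvd_mul_left c ho_dvd) htrivial
  have hlevel : c * o = c * d :=
    (eq_level_of_isPrimitive_of_factorsThrough hχ hfactors).trans hcd.symm
  have hc : c ≠ 0 := left_ne_zero_of_mul (hcd ▸ NeZero.ne q)
  exact mul_left_cancel₀ hc hlevel ▸ IsPrimitiveRoot.orderOf _

end Factorization

theorem exp_two_pi_mul_I_div_pow_zpow (d : ℂ) (i : ℕ) (x : ℤ) :
    (exp (2 * Real.pi * I / d) ^ i) ^ x = exp (2 * Real.pi * I * i * x / d) := by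
  rw [← exp_nat_mul, ← exp_int_mul]
  congr 1
  ring

theorem postnikov_linear_general {q c d : ℕ} (hq : q ≠ 0) (hcd : c * d = q) (hdc : d ∣ c)
    (χ : DirichletCharacter ℂ q) :
    ∃ L : ℤ,
      (∀ x : ℤ, χ ((1 + (c : ℤ) * x : ℤ) : ZMod q) =
        exp (2 * Real.pi * I * (L : ℂ) * (x : ℂ) / (d : ℂ))) ∧
      (χ.IsPrimitive → Int.gcd L d = 1) := by
  have : NeZero q := ⟨hq⟩
  have : NeZero d := ⟨right_ne_zero_of_mul (hcd ▸ hq)⟩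
  have hroot := isPrimitiveRoot_exp d (NeZero.ne d)
  obtain ⟨i, -, hi⟩ := hroot.eq_pow_of_pow_eq_one (map_one_add_natCast_pow_eq_one χ hcd hdc)
  refine ⟨i, fun x => ?_, fun hχ => ?_⟩
  · push_cast
    rw [map_one_add_natCast_mul_intCast χ hcd hdc, ← hi, exp_two_pi_mul_I_div_pow_zpow]
  · rw [Int.gcd_natCast_natCast]
    exact (hroot.pow_iff_coprime (NeZero.pos d) i).mp
      (hi ▸ isPrimitiveRoot_map_one_add_natCast hχ hcd hdc)

/-- There is an integer `L̃` with `χ(1 + C₁(q)x) = e^{2πi L̃ x / D₁(q)}` for all integers `x`;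
moreover if `χ` is primitive then `gcd(L̃, D₁(q)) = 1`. -/
theorem postnikov_linear (q : ℕ) (hq : q ≠ 0) (χ : DirichletCharacter ℂ q) :
    ∃ Lt : ℤ,
      (∀ x : ℤ, χ (((1 + (C1 q : ℤ) * x : ℤ) : ZMod q)) =
        Complex.exp (2 * Real.pi * I * (Lt : ℂ) * (x : ℂ) / (D1 q : ℂ))) ∧
      (χ.IsPrimitive → Int.gcd Lt (D1 q) = 1) :=
  postnikov_linear_general hq (C1_mul_D1 hq) (D1_dvd_C1 q) χ
end

section
/- Let χ be a Dirichlet character modulo q. Then there exist integers L₀ and L such that χ(1 + C(q)·x) = e^{4πi L₀ x/(C(q)D(q)) + 2πi L x²/D(q)} for all integers x. Moreover, if χ is primitive, then L₀ and L can be chosen so that gcd(L, D(q)) = 1. -/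
open Complex

/-- `C(q) = ∏_{p^a ∥ q} p^⌈a/3⌉` (multiplicative extension of `C(p^a) := p^⌈a/3⌉`). -/
def CC (q : ℕ) : ℕ := q.factorization.prod fun p a => p ^ ((a + 2) / 3)

/-- Multiplicative extension of `D(p^a) := 1` if `a = 1`, `2^{a−2⌈a/3⌉+1}` if `p = 2, a > 1`,
and `p^{a−2⌈a/3⌉}` if `p ≠ 2, a > 1`. -/
def DD (q : ℕ) : ℕ := q.factorization.prod fun p a =>
  if a = 1 then 1
  else if p = 2 then p ^ (a - 2 * ((a + 2) / 3) + 1)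
  else p ^ (a - 2 * ((a + 2) / 3))

/-! Write `C = C(q)`, `D = D(q)` and `F x = χ (1 + C * x)`. Since `q ∣ C ^ 3`, one has
`F x * F y = F (x + y) * h (x * y)`, where `h t = χ (1 + C ^ 2 * t)` is an additive character of
period `B = q / gcd (q, C ^ 2)`, say `h t = exp (2πi m t / B)`. Thus `F` behaves like a quadratic
exponential whose bilinear form is prescribed by `h`. Now `D = B * e`, with `e = 2` if `4 ∣ q` and
`e = 1` otherwise; in the latter case `B` is odd, so in both cases `m t / B` can be written as
`-2 L t / D` modulo `1`. Dividing `F x` by `exp (2πi L x ^ 2 / D)` then leaves an additive character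
of period `q / C`, whose frequency is halved in the same way.

If `χ` is primitive, then `m` is coprime to `B`, since otherwise `χ` would be trivial on
`1 + d ℤ` for a proper divisor `d` of `q`; the choice of `L` preserves this coprimality.
-/

section QuadraticMaps

variable {R M F : Type*} [CommRing R] [CommMonoid M] [FunLike F R M] [MonoidHomClass F R M]

/-- The additive character `t ↦ χ (1 + c * t)` attached to a multiplicative map `χ` and an element
`c` of square zero. -/
def mapOneAddChar (χ : F) (c : R) (hc : c ^ 2 = 0) : AddChar R M where
  toFun t := χ (1 + c * t)
  map_zero_eq_one' := by simp
  map_add_eq_mul' s t := by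
    rw [← map_mul]
    congr 1
    linear_combination (-s * t) * hc

lemma map_one_add_mul_map_one_add (χ : F) {c : R} (hc : c ^ 3 = 0) (x y : R) :
    χ (1 + c * x) * χ (1 + c * y) = χ (1 + c * (x + y)) * χ (1 + c ^ 2 * (x * y)) := by
  rw [← map_mul, ← map_mul]
  congr 1
  linear_combination (-(x + y) * (x * y)) * hc

/-- The additive character left over when a quadratic function `f` is divided by the purely
quadratic function `x ↦ κ (x ^ 2)` with the same associated bilinear form. -/
def linearPart (f : R → M) (κ : AddChar R M) (hf_zero : f 0 = 1)
    (hf : ∀ x y, f x * f y = f (x + y) * κ (-2 * (x * y))) : AddChar R M where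
  toFun x := f x * κ (-x ^ 2)
  map_zero_eq_one' := by simp [hf_zero]
  map_add_eq_mul' x y := by
    rw [mul_mul_mul_comm, hf, mul_assoc, ← κ.map_add_eq_mul, ← κ.map_add_eq_mul]
    congr 2
    ring

end QuadraticMaps

section StdAddChar

lemma exists_eq_stdAddChar {n : ℕ} [NeZero n] (φ : AddChar ℤ ℂ) (hφ : φ n = 1) :
    ∃ a : ℤ, ∀ t : ℤ, φ t = ZMod.stdAddChar ((a * t : ℤ) : ZMod n) := by
  have hroot : φ 1 ^ n = 1 := by rw [← φ.map_nsmul_eq_pow, nsmul_one, hφ]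
  obtain ⟨i, -, hi⟩ :=
    (Complex.isPrimitiveRoot_exp n (NeZero.ne n)).eq_pow_of_pow_eq_one hroot
  refine ⟨i, fun t ↦ ?_⟩
  calc φ t = φ 1 ^ t := by rw [← φ.map_zsmul_eq_zpow, smul_eq_mul, mul_one]
    _ = exp (t * (i * (2 * Real.pi * I / n))) := by
      rw [← hi, ← exp_nat_mul, ← exp_int_mul]
    _ = _ := by
      rw [ZMod.stdAddChar_coe]
      push_cast
      ring_nf

lemma stdAddChar_mul_left (n k : ℕ) [NeZero n] [NeZero k] (j : ℤ) :
    ZMod.stdAddChar ((k * j : ℤ) : ZMod (n * k)) = ZMod.stdAddChar (j : ZMod n) := by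
  have hk : (k : ℂ) ≠ 0 := NeZero.ne _
  rw [ZMod.stdAddChar_coe, ZMod.stdAddChar_coe]
  push_cast
  rw [mul_left_comm, mul_comm (n : ℂ), mul_div_mul_left _ _ hk]

end StdAddChar

section Halving

lemma exists_dvd_sub_isCoprime_two_mul (n a : ℤ) :
    ∃ b, n ∣ a - b ∧ (IsCoprime a n → IsCoprime b (n * 2)) := by
  by_cases h : Even a ∧ Odd n
  · refine ⟨a + n, by simp, fun ha ↦ ?_⟩
    refine IsCoprime.mul_right ?_ (Int.isCoprime_two_right.2 (h.1.add_odd h.2))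
    simpa using ha.add_mul_left_left 1
  · refine ⟨a, by simp, fun ha ↦ ha.mul_right (Int.isCoprime_two_right.2 ?_)⟩
    by_contra ha'
    rw [Int.not_odd_iff_even] at ha'
    have hn : Even n := by simpa [ha'] using h
    exact absurd (ha.isUnit_of_dvd' ha'.two_dvd hn.two_dvd) (by decide)

lemma exists_dvd_mul_sub_two_mul {n e : ℤ} (h : Odd n ∧ e = 1 ∨ e = 2) (a : ℤ) :
    ∃ b, n * e ∣ e * a - 2 * b ∧ (IsCoprime a n → IsCoprime b (n * e)) := by
  obtain ⟨⟨j, rfl⟩, rfl⟩ | rfl := h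
  · refine ⟨a * (j + 1), ⟨-a, by ring⟩, fun ha ↦ ?_⟩
    have hdouble : a * (j + 1) * 2 = a + (2 * j + 1) * a := by ring
    rw [mul_one]
    refine IsCoprime.of_mul_left_left (y := 2) ?_
    rw [hdouble]
    exact ha.add_mul_left_left a
  · obtain ⟨b, ⟨k, hk⟩, hb⟩ := exists_dvd_sub_isCoprime_two_mul n a
    exact ⟨b, ⟨k, by linear_combination 2 * hk⟩, hb⟩

lemma exists_stdAddChar_two_mul_eq {n e : ℕ} [NeZero n] [NeZero e] (h : Odd n ∧ e = 1 ∨ e = 2)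
    (a : ℤ) : ∃ b : ℤ,
      (∀ t : ℤ, ZMod.stdAddChar ((2 * b * t : ℤ) : ZMod (n * e)) =
        ZMod.stdAddChar ((a * t : ℤ) : ZMod n)) ∧
      (IsCoprime a n → IsCoprime b ((n * e : ℕ) : ℤ)) := by
  obtain ⟨b, hb, hcoprime⟩ := exists_dvd_mul_sub_two_mul (n := n) (e := e) (by exact_mod_cast h) a
  refine ⟨b, fun t ↦ ?_, by simpa using hcoprime⟩
  rw [← stdAddChar_mul_left n e]
  congr 1
  rw [ZMod.intCast_eq_intCast_iff_dvd_sub]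
  push_cast
  exact (hb.mul_right t).trans (dvd_of_eq (by ring))

end Halving

theorem exists_map_one_add_eq_stdAddChar_mul {R F : Type*} [CommRing R] [FunLike F R ℂ]
    [MonoidHomClass F R ℂ] (χ : F) {c : R} (hc : c ^ 3 = 0) {D N : ℕ} [NeZero D] [NeZero N]
    (hDN : D ∣ N) (hcN : c * N = 0) {L : ℤ}
    (hL : ∀ t : ℤ, χ (1 + c ^ 2 * t) = ZMod.stdAddChar ((2 * -L * t : ℤ) : ZMod D)) :
    ∃ l : ℤ, ∀ x : ℤ, χ (1 + c * x) =
      ZMod.stdAddChar ((l * x : ℤ) : ZMod N) * ZMod.stdAddChar ((L * x ^ 2 : ℤ) : ZMod D) := by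
  let κ : AddChar ℤ ℂ :=
    (ZMod.stdAddChar.mulShift (L : ZMod D)).compAddMonoidHom (Int.castAddHom (ZMod D))
  have hκ (t : ℤ) : κ t = ZMod.stdAddChar ((L * t : ℤ) : ZMod D) := by
    simp [κ, AddChar.mulShift_apply]
  let φ := linearPart (fun x : ℤ ↦ χ (1 + c * x)) κ (by simp) fun x y ↦ by
    rw [map_one_add_mul_map_one_add χ hc, hκ, ← Int.cast_add, ← Int.cast_mul, hL]
    congr 3
    ring
  have hφ (x : ℤ) : φ x = χ (1 + c * x) * κ (-x ^ 2) := rfl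
  have hφN : φ N = 1 := by
    have hND : (N : ZMod D) = 0 := (ZMod.natCast_eq_zero_iff _ _).2 hDN
    simp [hφ, hκ, hcN, hND]
  obtain ⟨l, hl⟩ := exists_eq_stdAddChar φ hφN
  refine ⟨l, fun x ↦ ?_⟩
  rw [← hl, hφ, ← hκ, mul_assoc, ← κ.map_add_eq_mul, neg_add_cancel, κ.map_zero_eq_one, mul_one]

section Dirichlet

lemma exists_map_one_add_mul_ne_one {R : Type*} [CommMonoidWithZero R] {q : ℕ} [NeZero q]
    {χ : DirichletCharacter R q} (hχ : χ.IsPrimitive) {d : ℕ} (hd : d ∣ q) (hdq : d ≠ q) :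
    ∃ x : ℤ, χ (1 + d * x) ≠ 1 := by
  by_contra! htriv
  have hfactors : χ.FactorsThrough d := by
    rw [DirichletCharacter.factorsThrough_iff_ker_unitsMap hd]
    intro u hu
    obtain ⟨a, ha⟩ := ZMod.intCast_surjective (u : ZMod q)
    have hmod : ((1 : ℤ) : ZMod d) = a := by
      have := congrArg Units.val (MonoidHom.mem_ker.1 hu)
      rw [ZMod.unitsMap_val, ← ha, ZMod.cast_intCast hd] at this
      simpa using this.symm
    obtain ⟨x, hx⟩ := (ZMod.intCast_eq_intCast_iff_dvd_sub _ _ _).1 hmod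
    have hu' : (u : ZMod q) = 1 + d * x := by
      rw [← ha, eq_add_of_sub_eq' hx]
      push_cast
      rfl
    rw [MonoidHom.mem_ker, Units.ext_iff, MulChar.coe_toUnitHom, hu', htriv, Units.val_one]
  have hle : q ≤ d := (χ.isPrimitive_def.1 hχ).symm.trans_le (Nat.sInf_le hfactors)
  exact hdq ((Nat.le_of_dvd (NeZero.pos q) hd).antisymm hle)

variable {q k B : ℕ} [NeZero B]

lemma exists_map_one_add_eq_stdAddChar {F : Type*} [FunLike F (ZMod q) ℂ]
    [MonoidHomClass F (ZMod q) ℂ] (χ : F) (hk : (k : ZMod q) ^ 2 = 0) (hB : q ∣ k * B) :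
    ∃ m : ℤ, ∀ t : ℤ, χ (1 + k * t) = ZMod.stdAddChar ((m * t : ℤ) : ZMod B) := by
  let φ : AddChar ℤ ℂ := (mapOneAddChar χ (k : ZMod q) hk).compAddMonoidHom (Int.castAddHom _)
  have hφ (t : ℤ) : φ t = χ (1 + k * t) := rfl
  have hkB : (k * B : ZMod q) = 0 := by exact_mod_cast (ZMod.natCast_eq_zero_iff _ _).2 hB
  exact exists_eq_stdAddChar φ (by simp [hφ, hkB])

lemma isCoprime_of_isPrimitive [NeZero q] {χ : DirichletCharacter ℂ q} (hχ : χ.IsPrimitive)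
    (hB : q.gcd k * B = q) {m : ℤ}
    (hm : ∀ t : ℤ, χ (1 + k * t) = ZMod.stdAddChar ((m * t : ℤ) : ZMod B)) : IsCoprime m B := by
  rw [Int.isCoprime_iff_gcd_eq_one]
  by_contra hg
  set g := Int.gcd m B
  obtain ⟨b, hb⟩ : g ∣ B := Int.natCast_dvd_natCast.1 (Int.gcd_dvd_right m B)
  obtain ⟨a, ha⟩ : (g : ℤ) ∣ m := Int.gcd_dvd_left m B
  have hq : q = q.gcd k * b * g := by rw [mul_assoc, mul_comm b, ← hb, hB]
  have hne : q.gcd k * b ≠ q := fun h ↦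
    hg ((mul_eq_left₀ (NeZero.ne q)).1 (by rwa [h, eq_comm] at hq))
  obtain ⟨x, hx⟩ := exists_map_one_add_mul_ne_one hχ (Dvd.intro _ hq.symm) hne
  refine hx ?_
  have hbezout : (q.gcd k : ZMod q) = k * (q.gcdB k : ℤ) := by
    have := congrArg (Int.cast : ℤ → ZMod q) (Nat.gcd_eq_gcd_ab q k)
    simpa using this
  calc χ (1 + (q.gcd k * b : ℕ) * x) = χ (1 + k * (q.gcdB k * b * x : ℤ)) := by
        push_cast
        rw [hbezout]
        ring_nf
    _ = ZMod.stdAddChar ((B * (a * q.gcdB k * x) : ℤ) : ZMod B) := by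
        have hb' : (B : ℤ) = g * b := by exact_mod_cast hb
        rw [hm]
        congr 2
        linear_combination (q.gcdB k * b * x) * ha - (a * q.gcdB k * x) * hb'
    _ = 1 := by simp

end Dirichlet

theorem exists_map_one_add_eq_stdAddChar_two_mul_mul {q C N B e : ℕ}
    [NeZero q] [NeZero N] [NeZero B] [NeZero e] (χ : DirichletCharacter ℂ q)
    (hC : q ∣ C ^ 3) (hN : q ∣ C * N) (hB : q.gcd (C ^ 2) * B = q) (hBN : B * e ∣ N)
    (he : Odd N ∧ e = 1 ∨ e = 2) :
    ∃ a L : ℤ,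
      (∀ x : ℤ, χ (1 + C * x) = ZMod.stdAddChar ((2 * a * x : ℤ) : ZMod (N * e)) *
        ZMod.stdAddChar ((L * x ^ 2 : ℤ) : ZMod (B * e))) ∧
      (χ.IsPrimitive → IsCoprime L ((B * e : ℕ) : ℤ)) := by
  have hc : (C : ZMod q) ^ 3 = 0 := by exact_mod_cast (ZMod.natCast_eq_zero_iff _ _).2 hC
  have hc2 : ((C ^ 2 : ℕ) : ZMod q) ^ 2 = 0 := by
    push_cast
    linear_combination (C : ZMod q) * hc
  have hcN : (C * N : ZMod q) = 0 := by exact_mod_cast (ZMod.natCast_eq_zero_iff _ _).2 hN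
  have hqB : q ∣ C ^ 2 * B := hB ▸ mul_dvd_mul_right (q.gcd_dvd_right (C ^ 2)) B
  have heB : Odd B ∧ e = 1 ∨ e = 2 :=
    he.imp_left fun h ↦ ⟨h.1.of_dvd_nat (dvd_of_mul_right_dvd hBN), h.2⟩
  obtain ⟨m, hm⟩ := exists_map_one_add_eq_stdAddChar χ hc2 hqB
  obtain ⟨b, hb, hcoprime⟩ := exists_stdAddChar_two_mul_eq heB m
  obtain ⟨l, hl⟩ := exists_map_one_add_eq_stdAddChar_mul χ hc hBN hcN (L := -b) fun t ↦ by
    rw [neg_neg, hb, ← hm, Nat.cast_pow]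
  obtain ⟨a, ha, -⟩ := exists_stdAddChar_two_mul_eq he l
  refine ⟨a, -b, fun x ↦ ?_, fun hχ ↦ (hcoprime (isCoprime_of_isPrimitive hχ hB hm)).neg_left⟩
  rw [hl, ha]

theorem exists_map_one_add_eq_exp {q C D e : ℕ} [NeZero q] (χ : DirichletCharacter ℂ q)
    (hC : q ∣ C ^ 3) (hCD : C * D ∣ q) (hD : D * q.gcd (C ^ 2) = q * e)
    (he : Odd (q / C) ∧ e = 1 ∨ e = 2) :
    ∃ L0 L : ℤ,
      (∀ x : ℤ, χ (1 + C * x) =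
        exp (4 * Real.pi * I * L0 * x / (C * D) + 2 * Real.pi * I * L * x ^ 2 / D)) ∧
      (χ.IsPrimitive → IsCoprime L D) := by
  have hq : q ≠ 0 := NeZero.ne q
  obtain ⟨N, hN⟩ : C ∣ q := dvd_of_mul_right_dvd hCD
  obtain ⟨B, hB⟩ : ∃ B, q.gcd (C ^ 2) * B = q := (q.gcd_dvd_left (C ^ 2)).imp fun _ ↦ Eq.symm
  have hC0 : C ≠ 0 := left_ne_zero_of_mul (hN ▸ hq)
  have : NeZero N := ⟨right_ne_zero_of_mul (hN ▸ hq)⟩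
  have : NeZero B := ⟨right_ne_zero_of_mul (hB.trans_ne hq)⟩
  have : NeZero e := ⟨by omega⟩
  obtain rfl : D = B * e := mul_right_cancel₀ (Nat.gcd_ne_zero_left hq) <| by
    rw [hD, mul_right_comm, mul_comm B, hB]
  have hBN : B * e ∣ N := Nat.dvd_of_mul_dvd_mul_left (Nat.pos_of_ne_zero hC0) (hN ▸ hCD)
  rw [hN, Nat.mul_div_cancel_left _ (Nat.pos_of_ne_zero hC0)] at he
  obtain ⟨a, L, hχ, hcoprime⟩ :=
    exists_map_one_add_eq_stdAddChar_two_mul_mul χ hC hN.dvd hB hBN he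
  obtain ⟨k, hk⟩ : N ∣ C * B := by
    refine Nat.dvd_of_mul_dvd_mul_left (Nat.pos_of_ne_zero hC0) ?_
    rw [← hN, ← mul_assoc, ← sq]
    exact hB ▸ mul_dvd_mul_right (q.gcd_dvd_right (C ^ 2)) B
  have hk0 : (k : ℂ) ≠ 0 :=
    Nat.cast_ne_zero.2 (right_ne_zero_of_mul (hk ▸ mul_ne_zero hC0 (NeZero.ne B)))
  have hden : (C * (B * e) : ℂ) = N * e * k := by
    have hkC : (C * B : ℂ) = N * k := by exact_mod_cast hk
    linear_combination (e : ℂ) * hkC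
  refine ⟨a * k, L, fun x ↦ ?_, hcoprime⟩
  rw [hχ, ZMod.stdAddChar_coe, ZMod.stdAddChar_coe, ← exp_add]
  push_cast
  rw [hden, ← mul_div_mul_right _ (N * e : ℂ) hk0]
  ring_nf

section Arithmetic

variable {q : ℕ}

lemma factorization_prod_pow_apply {e : ℕ → ℕ → ℕ} (he : ∀ p, e p 0 = 0) (p : ℕ) :
    (q.factorization.prod fun p a ↦ p ^ e p a).factorization p = e p (q.factorization p) := by
  have hsum (r : ℕ) (hr : r ∈ q.primeFactors) :
      (r ^ e r (q.factorization r)).factorization p =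
        if r = p then e p (q.factorization p) else 0 := by
    rw [(Nat.prime_of_mem_primeFactors hr).factorization_pow, Finsupp.single_apply]
    split_ifs with h
    · rw [h]
    · rfl
  rw [Finsupp.prod, Nat.support_factorization, Nat.factorization_prod_apply
    fun r hr ↦ pow_ne_zero _ (Nat.prime_of_mem_primeFactors hr).ne_zero, Finset.sum_congr rfl hsum,
    Finset.sum_ite_eq', ite_eq_left_iff, ← Nat.support_factorization, Finsupp.notMem_support_iff]
  intro h
  rw [h, he]

lemma factorization_CC (p : ℕ) : (CC q).factorization p = (q.factorization p + 2) / 3 :=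
  factorization_prod_pow_apply (e := fun _ a ↦ (a + 2) / 3) (fun _ ↦ rfl) p

lemma DD_eq_prod_pow : DD q = q.factorization.prod fun p a ↦
    p ^ if a ≤ 1 then 0 else a - 2 * ((a + 2) / 3) + if p = 2 then 1 else 0 := by
  refine Finsupp.prod_congr fun p hp ↦ ?_
  have ha : q.factorization p ≠ 0 := Finsupp.mem_support_iff.1 hp
  rcases eq_or_ne (q.factorization p) 1 with h1 | h1
  · simp [h1]
  · have h2 : ¬ q.factorization p ≤ 1 := by omega
    simp only [if_neg h1, if_neg h2]
    split_ifs <;> rfl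

lemma factorization_DD (p : ℕ) : (DD q).factorization p =
    if q.factorization p ≤ 1 then 0
    else q.factorization p - 2 * ((q.factorization p + 2) / 3) + if p = 2 then 1 else 0 := by
  rw [DD_eq_prod_pow]
  exact factorization_prod_pow_apply
    (e := fun p a ↦ if a ≤ 1 then 0 else a - 2 * ((a + 2) / 3) + if p = 2 then 1 else 0)
    (fun _ ↦ rfl) p

lemma CC_ne_zero : CC q ≠ 0 :=
  Finset.prod_ne_zero_iff.2 fun _ hp ↦ pow_ne_zero _ (Nat.prime_of_mem_primeFactors hp).ne_zero

lemma DD_ne_zero : DD q ≠ 0 := by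
  rw [DD_eq_prod_pow]
  exact Finset.prod_ne_zero_iff.2 fun _ hp ↦
    pow_ne_zero _ (Nat.prime_of_mem_primeFactors hp).ne_zero

lemma dvd_CC_pow_three (hq : q ≠ 0) : q ∣ CC q ^ 3 := by
  rw [← Nat.factorization_prime_le_iff_dvd hq (pow_ne_zero _ CC_ne_zero)]
  intro p _
  rw [Nat.factorization_pow, Finsupp.smul_apply, smul_eq_mul, factorization_CC]
  omega

lemma CC_mul_DD_dvd : CC q * DD q ∣ q := by
  rcases eq_or_ne q 0 with rfl | hq
  · exact dvd_zero _
  rw [← Nat.factorization_prime_le_iff_dvd (mul_ne_zero CC_ne_zero DD_ne_zero) hq]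
  intro p _
  rw [Nat.factorization_mul CC_ne_zero DD_ne_zero, Finsupp.add_apply, factorization_CC,
    factorization_DD]
  split_ifs <;> omega

lemma odd_div_CC (hq : ¬ 4 ∣ q) : Odd (q / CC q) := by
  have hq0 : q ≠ 0 := by rintro rfl; simp at hq
  have hC : CC q ∣ q := dvd_of_mul_right_dvd CC_mul_DD_dvd
  have h4 : ¬ 2 ≤ q.factorization 2 := fun h ↦
    hq ((Nat.prime_two.pow_dvd_iff_le_factorization hq0).2 h)
  rw [← Nat.not_even_iff_odd, even_iff_two_dvd, Nat.prime_two.dvd_iff_one_le_factorization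
    (Nat.div_ne_zero_iff_of_dvd hC |>.2 ⟨hq0, CC_ne_zero⟩), Nat.factorization_div hC,
    Finsupp.tsub_apply, factorization_CC]
  omega

lemma DD_mul_gcd (hq : q ≠ 0) :
    DD q * q.gcd (CC q ^ 2) = q * if 4 ∣ q then 2 else 1 := by
  have hC2 : CC q ^ 2 ≠ 0 := pow_ne_zero _ CC_ne_zero
  have hg : q.gcd (CC q ^ 2) ≠ 0 := Nat.gcd_ne_zero_left hq
  refine Nat.eq_of_factorization_eq (mul_ne_zero DD_ne_zero hg)
    (mul_ne_zero hq (by split_ifs <;> simp)) fun p ↦ ?_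
  have h4 : 4 ∣ q ↔ 2 ≤ q.factorization 2 := Nat.prime_two.pow_dvd_iff_le_factorization hq (k := 2)
  have hif : (if 4 ∣ q then 2 else 1 : ℕ).factorization p =
      if p = 2 ∧ 2 ≤ q.factorization p then 1 else 0 := by
    rcases eq_or_ne p 2 with rfl | hp
    · by_cases h : 2 ≤ q.factorization 2 <;> simp [h4, h, Nat.prime_two.factorization_self]
    · by_cases h : 4 ∣ q <;> simp [h, hp, Nat.prime_two.factorization]
  rw [Nat.factorization_mul DD_ne_zero hg, Nat.factorization_mul hq (by split_ifs <;> simp),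
    Nat.factorization_gcd hq hC2, Finsupp.add_apply, Finsupp.add_apply, hif, Finsupp.inf_apply,
    Nat.factorization_pow, Finsupp.smul_apply, smul_eq_mul, factorization_CC, factorization_DD]
  split_ifs <;> omega

end Arithmetic

/-- There are integers `L₀`, `L` with
`χ(1 + C(q)x) = e^{4πi L₀ x/(C(q)D(q)) + 2πi L x²/D(q)}` for all integers `x`; moreover if `χ`
is primitive then `L₀, L` can be chosen with `gcd(L, D(q)) = 1`. -/
theorem postnikov_quadratic (q : ℕ) (hq : q ≠ 0) (χ : DirichletCharacter ℂ q) :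
    ∃ L0 L : ℤ,
      (∀ x : ℤ, χ (((1 + (CC q : ℤ) * x : ℤ) : ZMod q)) =
        Complex.exp (4 * Real.pi * I * (L0 : ℂ) * (x : ℂ) / ((CC q : ℂ) * (DD q : ℂ)) +
          2 * Real.pi * I * (L : ℂ) * (x : ℂ) ^ 2 / (DD q : ℂ))) ∧
      (χ.IsPrimitive → Int.gcd L (DD q) = 1) := by
  have : NeZero q := ⟨hq⟩
  obtain ⟨L0, L, hexp, hcoprime⟩ := exists_map_one_add_eq_exp χ (dvd_CC_pow_three hq)
    CC_mul_DD_dvd (DD_mul_gcd hq) (by split_ifs with h <;> simp [odd_div_CC, h])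
  refine ⟨L0, L, fun x ↦ ?_, fun hχ ↦ Int.isCoprime_iff_gcd_eq_one.1 (hcoprime hχ)⟩
  rw [← hexp]
  push_cast
  rfl
end

section
/- Let M and N be positive integers. Then ∑_{m=1}^{M} (1 − m/M) · gcd(2m, N)/m ≤ τ(N) · log M, where τ(N) is the number of positive divisors of N. -/
/-!
Replace the factor `2` by any natural number `a`. Expanding `gcd (a * m, N)` as the sum of `φ d`
over the `d ∣ N` with `d ∣ a * m` and exchanging the sums, each `d` contributes `φ d` times a sum
over the multiples `m ≤ M` of `e = d / gcd (d, a)`. That sum, multiplied by `e`, is `H_K - K e / M`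
with `K = ⌊M / e⌋`, which `H_K ≤ 1 + log K` bounds by `log M`; and `φ d ≤ e * φ (gcd (d, a))`. For
`a = 2` every `φ (gcd (d, a))` is `1`, so these add up to `τ(N)`.
-/

open Finset

open scoped Nat Real

theorem totient_mul_le_mul_totient (a b : ℕ) : φ (a * b) ≤ a * φ b := by
  induction a using Nat.recOnMul generalizing b with
  | zero => simp
  | one => simp
  | prime p hp =>
    by_cases hpb : p ∣ b
    · exact (Nat.totient_mul_of_prime_of_dvd hp hpb).le
    · rw [Nat.totient_mul_of_prime_of_not_dvd hp hpb]
      exact Nat.mul_le_mul_right _ (Nat.sub_le p 1)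
  | mul m n ihm ihn =>
    calc φ (m * n * b) = φ (m * (n * b)) := by rw [mul_assoc]
      _ ≤ m * φ (n * b) := ihm _
      _ ≤ m * (n * φ b) := Nat.mul_le_mul_left m (ihn b)
      _ = m * n * φ b := (mul_assoc ..).symm

theorem totient_le_div_mul_totient {d g : ℕ} (h : g ∣ d) : φ d ≤ d / g * φ g := by
  simpa only [Nat.div_mul_cancel h] using totient_mul_le_mul_totient (d / g) g

theorem totient_eq_one_of_dvd_two {g : ℕ} (h : g ∣ 2) : φ g = 1 :=
  Nat.totient_eq_one_iff.mpr ((Nat.dvd_prime Nat.prime_two).mp h)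

theorem dvd_mul_iff_div_gcd_dvd {d : ℕ} (hd : d ≠ 0) (a m : ℕ) :
    d ∣ a * m ↔ d / d.gcd a ∣ m := by
  rw [Nat.div_dvd_iff_dvd_mul (Nat.gcd_dvd_left d a) (Nat.gcd_pos_of_pos_left a hd.pos)]
  exact dvd_gcd_mul_iff_dvd_mul.symm

theorem gcd_eq_sum_totient {N : ℕ} (hN : N ≠ 0) (n : ℕ) :
    n.gcd N = ∑ d ∈ N.divisors with d ∣ n, φ d := by
  have hdivisors : {d ∈ N.divisors | d ∣ n} = (n.gcd N).divisors := by
    ext d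
    have hgcd : n.gcd N ≠ 0 := Nat.gcd_ne_zero_right hN
    simp only [mem_filter, Nat.mem_divisors, Nat.dvd_gcd_iff, ne_eq, hN, hgcd,
      not_false_eq_true, and_true]
    exact and_comm
  rw [hdivisors, Nat.sum_totient]

theorem sum_mul_gcd_eq_sum_divisors {ι R : Type*} [CommSemiring R] (s : Finset ι) (w : ι → R)
    (n : ι → ℕ) {N : ℕ} (hN : N ≠ 0) :
    ∑ i ∈ s, w i * ((n i).gcd N : R) =
      ∑ d ∈ N.divisors, (φ d : R) * ∑ i ∈ s with d ∣ n i, w i := by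
  simp only [gcd_eq_sum_totient hN, Nat.cast_sum, sum_filter, mul_sum, Nat.cast_ite,
    Nat.cast_zero, mul_ite, mul_zero]
  rw [sum_comm]
  simp only [mul_comm]

theorem sum_Icc_filter_dvd {R : Type*} [AddCommMonoid R] {e : ℕ} (he : 0 < e) (M : ℕ)
    (f : ℕ → R) :
    ∑ m ∈ Icc 1 M with e ∣ m, f m = ∑ k ∈ Icc 1 (M / e), f (e * k) := by
  have himage : {m ∈ Icc 1 M | e ∣ m} = (Icc 1 (M / e)).image (e * ·) := by
    ext m
    simp only [mem_filter, mem_Icc, mem_image, Nat.le_div_iff_mul_le he, mul_comm _ e]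
    constructor
    · rintro ⟨⟨hpos, hle⟩, k, rfl⟩
      exact ⟨k, ⟨Nat.pos_of_mul_pos_left hpos, hle⟩, rfl⟩
    · rintro ⟨k, ⟨hpos, hle⟩, rfl⟩
      exact ⟨⟨Nat.mul_pos he hpos, hle⟩, dvd_mul_right e k⟩
  rw [himage, sum_image fun _ _ _ _ h ↦ Nat.eq_of_mul_eq_mul_left he h]

theorem harmonic_sub_div_le_posLog (K : ℕ) {x : ℝ} (hx : 0 < x) :
    (harmonic K : ℝ) - K / x ≤ log⁺ x := by
  rcases K.eq_zero_or_pos with rfl | hK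
  · simpa using Real.posLog_nonneg
  have hK' : (0 : ℝ) < K := Nat.cast_pos.mpr hK
  have hlog : Real.log K - Real.log x ≤ K / x - 1 := by
    rw [← Real.log_div hK'.ne' hx.ne']
    exact Real.log_le_sub_one_of_pos (div_pos hK' hx)
  calc (harmonic K : ℝ) - K / x ≤ 1 + Real.log K - K / x :=
        sub_le_sub_right (harmonic_le_one_add_log K) _
    _ ≤ Real.log x := by linarith
    _ ≤ log⁺ x := le_max_right _ _

theorem mul_sum_filter_dvd_eq_harmonic_sub_div (M : ℕ) {e : ℕ} (he : 0 < e) :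
    (e : ℝ) * ∑ m ∈ Icc 1 M with e ∣ m, (1 - (m : ℝ) / M) / m =
      harmonic (M / e) - (M / e : ℕ) / ((M : ℝ) / e) := by
  have hterm (k : ℕ) (hk : k ∈ Icc 1 (M / e)) :
      (e : ℝ) * ((1 - ((e * k : ℕ) : ℝ) / M) / (e * k : ℕ)) = (k : ℝ)⁻¹ - ((M : ℝ) / e)⁻¹ := by
    have hk' : 0 < k := (mem_Icc.mp hk).1
    push_cast
    field_simp
  rw [sum_Icc_filter_dvd he, mul_sum, sum_congr rfl hterm, sum_sub_distrib, sum_const,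
    Nat.card_Icc, Nat.add_sub_cancel, nsmul_eq_mul, ← div_eq_mul_inv, harmonic_eq_sum_Icc]
  push_cast
  rfl

theorem mul_sum_filter_dvd_le_log {M e : ℕ} (hM : 0 < M) (he : 0 < e) :
    (e : ℝ) * ∑ m ∈ Icc 1 M with e ∣ m, (1 - (m : ℝ) / M) / m ≤ Real.log M := by
  have hx : (0 : ℝ) < M / e := by positivity
  calc _ = (harmonic (M / e) : ℝ) - (M / e : ℕ) / ((M : ℝ) / e) :=
        mul_sum_filter_dvd_eq_harmonic_sub_div M he
    _ ≤ log⁺ ((M : ℝ) / e) := harmonic_sub_div_le_posLog _ hx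
    _ ≤ log⁺ (M : ℝ) :=
        Real.posLog_le_posLog hx.le (div_le_self M.cast_nonneg (Nat.one_le_cast.mpr he))
    _ = Real.log M := Real.log_of_nat_eq_posLog

theorem totient_mul_sum_filter_dvd_mul_le {M d : ℕ} (hM : 0 < M) (hd : 0 < d) (a : ℕ) :
    (φ d : ℝ) * ∑ m ∈ Icc 1 M with d ∣ a * m, (1 - (m : ℝ) / M) / m ≤
      φ (d.gcd a) * Real.log M := by
  set e := d / d.gcd a
  have he : 0 < e := Nat.div_gcd_pos_of_pos_left a hd
  have htotient : (φ d : ℝ) ≤ φ (d.gcd a) * e := by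
    exact_mod_cast (totient_le_div_mul_totient (Nat.gcd_dvd_left d a)).trans_eq (mul_comm ..)
  have hnonneg : 0 ≤ ∑ m ∈ Icc 1 M with e ∣ m, (1 - (m : ℝ) / M) / m := by
    refine sum_nonneg fun m hm ↦ div_nonneg (sub_nonneg.mpr ?_) m.cast_nonneg
    have hmM : m ≤ M := (mem_Icc.mp (mem_filter.mp hm).1).2
    exact div_le_one_of_le₀ (Nat.cast_le.mpr hmM) M.cast_nonneg
  simp only [dvd_mul_iff_div_gcd_dvd hd.ne']
  calc _ ≤ φ (d.gcd a) * (e : ℝ) * ∑ m ∈ Icc 1 M with e ∣ m, (1 - (m : ℝ) / M) / m :=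
        mul_le_mul_of_nonneg_right htotient hnonneg
    _ ≤ φ (d.gcd a) * Real.log M := by
        rw [mul_assoc]
        exact mul_le_mul_of_nonneg_left (mul_sum_filter_dvd_le_log hM he) (Nat.cast_nonneg _)

theorem gcd_weighted_sum_div_le_general (a M N : ℕ) (hM : 0 < M) (hN : 0 < N) :
    ∑ m ∈ Icc 1 M, (1 - (m : ℝ) / M) * (Nat.gcd (a * m) N : ℝ) / m ≤
      (∑ d ∈ N.divisors, φ (d.gcd a) : ℕ) * Real.log M := by
  simp only [mul_div_right_comm]
  rw [sum_mul_gcd_eq_sum_divisors _ _ _ hN.ne', Nat.cast_sum, sum_mul]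
  exact sum_le_sum fun d hd ↦
    totient_mul_sum_filter_dvd_mul_le hM (Nat.pos_of_mem_divisors hd) a

/-- `∑_{m=1}^{M} (1 − m/M) · gcd(2m, N)/m ≤ τ(N) · log M`. -/
theorem gcd_weighted_sum_div_le (M N : ℕ) (hM : 0 < M) (hN : 0 < N) :
    ∑ m ∈ Finset.Icc 1 M, (1 - (m : ℝ) / M) * (Nat.gcd (2 * m) N : ℝ) / m ≤
      (N.divisors.card : ℝ) * Real.log M := by
  simpa only [totient_eq_one_of_dvd_two (Nat.gcd_dvd_right _ 2), sum_const, smul_eq_mul, mul_one]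
    using gcd_weighted_sum_div_le_general 2 M N hM hN
end

section
/- Let L and C be positive integers. Then ∑_{r=0}^{C−1} √⌊(L + r)/C⌋ ≤ √(C·L). -/
/-!
By Cauchy–Schwarz the left-hand side is at most the square root of `C` times the sum of the floors,
and that sum equals `L` (Hermite's identity): raising `L` by one shifts the window of `C`
consecutive numerators, trading `⌊L / C⌋` for `⌊(L + C) / C⌋ = ⌊L / C⌋ + 1`.
-/

open Finset Real

theorem sum_range_add_one_add_ediv {n : ℕ} (hn : n ≠ 0) (a : ℤ) :
    ∑ r ∈ range n, (a + 1 + r) / n = ∑ r ∈ range n, (a + r) / n + 1 := by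
  let f : ℕ → ℤ := fun r ↦ (a + r) / n
  have endpoints : f n = f 0 + 1 := by
    simpa [f] using Int.add_mul_ediv_right a 1 (Nat.cast_ne_zero.mpr hn)
  have shift : ∑ r ∈ range n, (a + 1 + r) / n = ∑ r ∈ range n, f (r + 1) :=
    sum_congr rfl fun r _ ↦ by simp only [f, Nat.cast_succ, add_assoc, add_comm (1 : ℤ)]
  have window : ∑ r ∈ range n, f (r + 1) + f 0 = ∑ r ∈ range n, f r + f n :=
    (sum_range_succ' f n).symm.trans (sum_range_succ f n)
  linarith

theorem sum_range_add_ediv {n : ℕ} (hn : n ≠ 0) (a : ℤ) :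
    ∑ r ∈ range n, (a + r) / n = a := by
  induction a with
  | zero =>
    refine sum_eq_zero fun r hr ↦ ?_
    rw [zero_add]
    exact_mod_cast Nat.div_eq_of_lt (mem_range.mp hr)
  | succ k ih => rw [sum_range_add_one_add_ediv hn, ih]
  | pred k ih =>
    have sum_succ := sum_range_add_one_add_ediv hn (-k - 1)
    rw [sub_add_cancel, ih] at sum_succ
    linarith

theorem sum_sqrt_le_sqrt_card_mul_sum {ι : Type*} {s : Finset ι} {f : ι → ℝ}
    (hf : ∀ i ∈ s, 0 ≤ f i) : ∑ i ∈ s, √(f i) ≤ √(#s * ∑ i ∈ s, f i) := by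
  apply le_sqrt_of_sq_le
  calc (∑ i ∈ s, √(f i)) ^ 2 ≤ #s * ∑ i ∈ s, √(f i) ^ 2 := sq_sum_le_card_mul_sum_sq
    _ = #s * ∑ i ∈ s, f i := by rw [sum_congr rfl fun i hi ↦ sq_sqrt (hf i hi)]

/-- Let `L` and `C` be positive integers. Then `∑_{r=0}^{C−1} √⌊(L+r)/C⌋ ≤ √(C·L)`. -/
theorem sum_sqrt_floor_le (L C : ℕ) (hL : 0 < L) (hC : 0 < C) :
    ∑ r ∈ Finset.range C, Real.sqrt (((L + r) / C : ℕ) : ℝ) ≤ Real.sqrt ((C : ℝ) * L) := by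
  have hermite : ∑ r ∈ range C, (((L + r) / C : ℕ) : ℝ) = L := by
    exact_mod_cast sum_range_add_ediv hC.ne' L
  calc ∑ r ∈ range C, √(((L + r) / C : ℕ) : ℝ)
      ≤ √(#(range C) * ∑ r ∈ range C, (((L + r) / C : ℕ) : ℝ)) :=
        sum_sqrt_le_sqrt_card_mul_sum fun _ _ ↦ Nat.cast_nonneg _
    _ = √(C * L) := by rw [card_range, hermite]
end
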